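/- Let θ ∈ [0,π]. The entanglement witness W_I(θ) − 2P is optimal: for every positive semidefinite 16×16 matrix D with D ≠ 0 and every ε > 0, the matrix W_I(θ) − 2P − ε·D is not block positive (i.e. there exist x,y : Fin 4 → ℂ with Re⟨x⊗y, (W_I(θ) − 2P − εD)(x⊗y)⟩ < 0). -/

import Mathlib

open Matrix Complex Real

/-- The tensor (product) vector `x ⊗ y` in `ℂ¹⁶`. -/
noncomputable def tensorVec (x y : Fin 4 → ℂ) : Fin 4 × Fin 4 → ℂ :=
  fun p => x p.1 * y p.2

/-- The expectation `⟨v, W v⟩ = ∑ i, conj (v i) * (W *ᵥ v) i`. -/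
noncomputable def expec (W : Matrix (Fin 4 × Fin 4) (Fin 4 × Fin 4) ℂ)
    (v : Fin 4 × Fin 4 → ℂ) : ℂ :=
  ∑ i, star (v i) * W.mulVec v i

/-- The Bell-diagonal matrix `W[a,b,c,d]` with `(α₀,α₁,α₂,α₃) = (a,b,c,d)`:
`W((k,m),(k',m')) = α_{(m−k) mod 4}` if `k=k', m=m'`; `−1` if `k=m, k'=m', k≠k'`;
`0` otherwise. -/
noncomputable def Wabcd (a b c d : ℝ) : Matrix (Fin 4 × Fin 4) (Fin 4 × Fin 4) ℂ :=
  fun p q =>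
    if p.1 = q.1 ∧ p.2 = q.2 then ((![a, b, c, d] (p.2 - p.1) : ℝ) : ℂ)
    else if p.1 = p.2 ∧ q.1 = q.2 ∧ p.1 ≠ q.1 then -1
    else 0

/-- The class-I witness `W_I(θ)`. -/
noncomputable def WI (θ : ℝ) : Matrix (Fin 4 × Fin 4) (Fin 4 × Fin 4) ℂ :=
  Wabcd ((2 - Real.sin θ) / 2) ((1 + Real.cos θ) / 2)
        (2 - (2 - Real.sin θ) / 2) (1 - (1 + Real.cos θ) / 2)

/-- The class-II witness `W_II(θ)`. -/
noncomputable def WII (θ : ℝ) : Matrix (Fin 4 × Fin 4) (Fin 4 × Fin 4) ℂ :=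
  Wabcd ((1 + Real.cos θ) / 2) ((2 - Real.sin θ) / 2)
        (1 - (1 + Real.cos θ) / 2) (2 - (2 - Real.sin θ) / 2)

/-- The maximally entangled vector `Ψ(j,j') = (−1)^{j+1}/2` if `j = j'`, else `0`. -/
noncomputable def PsiVec : Fin 4 × Fin 4 → ℂ :=
  fun p => if p.1 = p.2 then ((-1 : ℂ) ^ ((p.1 : ℕ) + 1)) / 2 else 0

/-- The rank-one projector `P = |Ψ⟩⟨Ψ|`. -/
noncomputable def Pmat : Matrix (Fin 4 × Fin 4) (Fin 4 × Fin 4) ℂ :=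
  fun u v => PsiVec u * star (PsiVec v)

open scoped ComplexOrder

/-!
If `W - ε D` is block positive, then `D` annihilates every product vector on which `W` vanishes.
For `W = W[a, b, 2 - a, 1 - b] - 2 P` the vectors `x ⊗ conj x` with all `|x k| = 1` are such zeros,
and averaging them over phases isolates each `e k ⊗ e l` with `k ≠ l`. Write `u k = D (e k ⊗ e k)`.
The zero `(e k + e (k+2)) ⊗ (e k + e (k+2))` gives `u k + u (k+2) = 0`. On
`(e k + r e (k+1)) ⊗ (e k + r⁻¹ e (k+1))` the expectation is `b r⁻² + (1 - b) r² - 2 (1 - a)`, whose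
infimum over `r > 0` is `0` by AM-GM, since class I satisfies `b (1 - b) = (1 - a)²` and `a ≤ 1`. At
`θ = 0` and `θ = π` the infimum is not attained and the vectors are unbounded as it is approached,
but modulo the vectors already annihilated they do not depend on `r`, so `u k + u (k+1) = 0` in all
cases. Hence every `u k` vanishes.
-/

lemma exists_pos_mul_inv_sq_add_mul_sq_le {b d η : ℝ} (hb : 0 ≤ b) (hd : 0 ≤ d) (hη : 0 < η) :
    ∃ r > 0, b * r⁻¹ ^ 2 + d * r ^ 2 ≤ 2 * √(b * d) + η := by
  obtain ⟨β, hβ, rfl⟩ : ∃ β, 0 ≤ β ∧ β ^ 2 = b := ⟨√b, sqrt_nonneg b, sq_sqrt hb⟩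
  obtain ⟨δ, hδ, rfl⟩ : ∃ δ, 0 ≤ δ ∧ δ ^ 2 = d := ⟨√d, sqrt_nonneg d, sq_sqrt hd⟩
  -- AM-GM is tight at `r ^ 2 = β / δ`; the shift by `κ` keeps this positive and finite.
  obtain ⟨κ, hκ, hκη⟩ : ∃ κ > 0, κ * (β + δ) ≤ η :=
    ⟨η / (β + δ + 1), by positivity, by
      rw [div_mul_eq_mul_div, div_le_iff₀ (by positivity)]
      nlinarith⟩
  refine ⟨√((β + κ) / (δ + κ)), by positivity, ?_⟩
  rw [inv_pow, sq_sqrt (by positivity), inv_div, ← mul_pow, sqrt_sq (by positivity)]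
  calc β ^ 2 * ((δ + κ) / (β + κ)) + δ ^ 2 * ((β + κ) / (δ + κ))
      = β * (β / (β + κ)) * (δ + κ) + δ * (δ / (δ + κ)) * (β + κ) := by ring
    _ ≤ β * 1 * (δ + κ) + δ * 1 * (β + κ) := by
        gcongr <;> exact div_le_one_of_le₀ (by linarith) (by positivity)
    _ = 2 * (β * δ) + κ * (β + δ) := by ring
    _ ≤ 2 * (β * δ) + η := by gcongr

section QuadraticForm

variable {n : Type*} [Fintype n]

lemma dotProduct_mulVec_congr_of_isHermitian {R : Type*} [NonUnitalSemiring R] [StarRing R]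
    {D : Matrix n n R} (hD : D.IsHermitian) {v g : n → R} (h : D *ᵥ v = D *ᵥ g) :
    star v ⬝ᵥ D *ᵥ v = star g ⬝ᵥ D *ᵥ g := by
  have adjoint (u w : n → R) : star u ⬝ᵥ D *ᵥ w = star (D *ᵥ u) ⬝ᵥ w := by
    rw [star_mulVec, hD.eq, dotProduct_mulVec]
  rw [h, adjoint, h, ← adjoint]

lemma mulVec_eq_zero_of_re_dotProduct_nonpos {𝕜 : Type*} [RCLike 𝕜] {D : Matrix n n 𝕜}
    (hD : D.PosSemidef) {v : n → 𝕜} (h : RCLike.re (star v ⬝ᵥ D *ᵥ v) ≤ 0) : D *ᵥ v = 0 := by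
  obtain ⟨hre, him⟩ := RCLike.nonneg_iff.1 (hD.dotProduct_mulVec_nonneg v)
  exact (hD.dotProduct_mulVec_zero_iff v).1 <|
    RCLike.ext (by rw [map_zero, le_antisymm h hre]) (by rw [map_zero, him])

end QuadraticForm

/-- Block positivity of `W`: nonnegative expectation on all product vectors. -/
def IsBlockPositive (W : Matrix (Fin 4 × Fin 4) (Fin 4 × Fin 4) ℂ) : Prop :=
  ∀ x y, 0 ≤ (expec W (tensorVec x y)).re

/-- Optimality of a witness `W`: no positive multiple of a nonzero positive semidefinite matrix can
be subtracted from `W` without losing block positivity. That `W` is itself a witness is not part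
of this definition. -/
def IsOptimalWitness (W : Matrix (Fin 4 × Fin 4) (Fin 4 × Fin 4) ℂ) : Prop :=
  ∀ D : Matrix (Fin 4 × Fin 4) (Fin 4 × Fin 4) ℂ, D.PosSemidef → D ≠ 0 →
    ∀ ε : ℝ, 0 < ε → ¬ IsBlockPositive (W - (ε : ℂ) • D)

section Expectation

variable (A B : Matrix (Fin 4 × Fin 4) (Fin 4 × Fin 4) ℂ) (v : Fin 4 × Fin 4 → ℂ)

lemma expec_eq_dotProduct : expec A v = star v ⬝ᵥ A *ᵥ v := rfl

lemma expec_sub : expec (A - B) v = expec A v - expec B v := by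
  simp only [expec_eq_dotProduct, sub_mulVec, dotProduct_sub]

lemma expec_smul (z : ℂ) : expec (z • A) v = z * expec A v := by
  simp only [expec_eq_dotProduct, smul_mulVec, dotProduct_smul, smul_eq_mul]

lemma expec_diagonal (w : Fin 4 × Fin 4 → ℝ) :
    expec (diagonal fun p => (w p : ℂ)) v = (∑ p, w p * normSq (v p) : ℝ) := by
  push_cast
  refine Finset.sum_congr rfl fun p _ => ?_
  rw [mulVec_diagonal, normSq_eq_conj_mul_self, starRingEnd_apply]
  ring

lemma expec_vecMulVec_star (u : Fin 4 × Fin 4 → ℂ) :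
    expec (vecMulVec u (star u)) v = (normSq (star u ⬝ᵥ v) : ℝ) := by
  rw [expec_eq_dotProduct, vecMulVec_mulVec, op_smul_eq_smul, dotProduct_smul, smul_eq_mul,
    star_dotProduct v u, normSq_eq_conj_mul_self, starRingEnd_apply, mul_comm]

end Expectation

section Kernel

variable {W D : Matrix (Fin 4 × Fin 4) (Fin 4 × Fin 4) ℂ} {ε : ℝ}

lemma mulVec_eq_zero_of_forall_exists_expec_le (hD : D.PosSemidef) (hε : 0 < ε)
    (hW : IsBlockPositive (W - (ε : ℂ) • D)) {g : Fin 4 × Fin 4 → ℂ}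
    (hg : ∀ η > 0, ∃ x y, D *ᵥ tensorVec x y = D *ᵥ g ∧ (expec W (tensorVec x y)).re ≤ η) :
    D *ᵥ g = 0 := by
  have hle : ε * (expec D g).re ≤ 0 := by
    refine le_of_forall_pos_le_add fun η hη => ?_
    obtain ⟨x, y, hxy, hxyη⟩ := hg η hη
    have hpos := hW x y
    rw [expec_sub, expec_smul, sub_re, re_ofReal_mul, expec_eq_dotProduct D,
      dotProduct_mulVec_congr_of_isHermitian hD.isHermitian hxy] at hpos
    rw [expec_eq_dotProduct]
    linarith
  exact mulVec_eq_zero_of_re_dotProduct_nonpos hD (nonpos_of_mul_nonpos_right hle hε)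

lemma mulVec_tensorVec_eq_zero (hD : D.PosSemidef) (hε : 0 < ε)
    (hW : IsBlockPositive (W - (ε : ℂ) • D)) {x y : Fin 4 → ℂ}
    (hxy : (expec W (tensorVec x y)).re = 0) : D *ᵥ tensorVec x y = 0 :=
  mulVec_eq_zero_of_forall_exists_expec_le hD hε hW fun _ hη => ⟨x, y, rfl, hxy.trans_le hη.le⟩

end Kernel

section ProductVectors

/-- The vector `e k + r • e l`, a factor of the product vectors supported on two levels. -/
def pairVec (k l : Fin 4) (r : ℂ) : Fin 4 → ℂ :=
  Pi.single k 1 + r • Pi.single l 1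

/-- The vector with entry `z` at `k`, entry `w` at `l ≠ k`, and `1` elsewhere. -/
def phaseVec (k l : Fin 4) (z w : ℂ) : Fin 4 → ℂ :=
  Function.update (Function.update 1 l w) k z

lemma norm_phaseVec (k l : Fin 4) {z w : ℂ} (hz : ‖z‖ = 1) (hw : ‖w‖ = 1) (m : Fin 4) :
    ‖phaseVec k l z w m‖ = 1 := by
  simp only [phaseVec, Function.update_apply]
  split_ifs <;> simp [hz, hw]

lemma tensorVec_pairVec {k l : Fin 4} {r : ℂ} (hr : r ≠ 0) :
    tensorVec (pairVec k l r) (pairVec k l r⁻¹) =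
      Pi.single (k, k) 1 + Pi.single (l, l) 1 +
        (r⁻¹ • Pi.single (k, l) 1 + r • Pi.single (l, k) 1) := by
  ext ⟨m, n⟩
  simp only [tensorVec, pairVec, Pi.add_apply, Pi.smul_apply, Pi.single_apply, Prod.mk.injEq,
    smul_eq_mul, ite_and]
  split_ifs <;> field_simp <;> ring

/-- Fourier inversion: among the entries of `x ⊗ conj x` with
`x = phaseVec k l (I ^ i) ((-1) ^ j)`, only the one at `(k, l)` varies as `I ^ i * (-1) ^ j`. -/
lemma single_eq_sum_tensorVec_phaseVec {k l : Fin 4} (hkl : k ≠ l) :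
    (Pi.single (k, l) 1 : Fin 4 × Fin 4 → ℂ) =
      (1 / 8 : ℂ) • ∑ i ∈ Finset.range 4, ∑ j ∈ Finset.range 2, (star (I ^ i) * (-1) ^ j) •
        tensorVec (phaseVec k l (I ^ i) ((-1) ^ j)) (star (phaseVec k l (I ^ i) ((-1) ^ j))) := by
  ext ⟨m, n⟩
  by_cases hmk : m = k <;> by_cases hml : m = l <;> by_cases hnk : n = k <;>
    by_cases hnl : n = l <;>
    simp_all [tensorVec, phaseVec, Finset.sum_range_succ, pow_succ] <;>
    ring_nf

lemma single_mem_span_tensorVec_star {k l : Fin 4} (hkl : k ≠ l) :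
    Pi.single (k, l) 1 ∈
      Submodule.span ℂ {v | ∃ x : Fin 4 → ℂ, (∀ m, ‖x m‖ = 1) ∧ tensorVec x (star x) = v} := by
  rw [single_eq_sum_tensorVec_phaseVec hkl]
  refine Submodule.smul_mem _ _ <| Submodule.sum_mem _ fun i _ => Submodule.sum_mem _ fun j _ =>
    Submodule.smul_mem _ _ <| Submodule.subset_span ⟨_, norm_phaseVec k l ?_ ?_, rfl⟩ <;> simp

end ProductVectors

section Witness

/-- The unnormalised maximally entangled vector `∑ k, e k ⊗ e k`. -/
def bellVec : Fin 4 × Fin 4 → ℂ :=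
  fun p => if p.1 = p.2 then 1 else 0

lemma Wabcd_eq_diagonal_sub_vecMulVec (a b c d : ℝ) :
    Wabcd a b c d =
      diagonal (fun p => ((![a + 1, b, c, d] (p.2 - p.1) : ℝ) : ℂ)) -
        vecMulVec bellVec (star bellVec) := by
  ext ⟨k, m⟩ ⟨k', m'⟩
  fin_cases k <;> fin_cases m <;> fin_cases k' <;> fin_cases m' <;>
    simp [Wabcd, bellVec, vecMulVec_apply]

lemma star_bellVec_dotProduct (v : Fin 4 × Fin 4 → ℂ) :
    star bellVec ⬝ᵥ v = ∑ k, v (k, k) := by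
  simp [bellVec, dotProduct, Fintype.sum_prod_type]

lemma star_PsiVec_dotProduct (v : Fin 4 × Fin 4 → ℂ) :
    star PsiVec ⬝ᵥ v = -(∑ k : Fin 4, (-1) ^ (k : ℕ) * v (k, k)) / 2 := by
  simp [PsiVec, dotProduct, Fintype.sum_prod_type, Fin.sum_univ_four, map_ofNat]
  ring

lemma re_expec_Wabcd_sub (a b c d : ℝ) (v : Fin 4 × Fin 4 → ℂ) :
    (expec (Wabcd a b c d - (2 : ℂ) • Pmat) v).re =
      ∑ p, ![a + 1, b, c, d] (p.2 - p.1) * normSq (v p) - normSq (∑ k, v (k, k)) -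
        normSq (∑ k : Fin 4, (-1) ^ (k : ℕ) * v (k, k)) / 2 := by
  have hP : Pmat = vecMulVec PsiVec (star PsiVec) := rfl
  rw [Wabcd_eq_diagonal_sub_vecMulVec, hP, expec_sub, expec_sub, expec_smul, expec_diagonal,
    expec_vecMulVec_star, expec_vecMulVec_star, star_bellVec_dotProduct, star_PsiVec_dotProduct,
    normSq_div, normSq_neg, normSq_ofNat]
  simp only [sub_re, ofReal_re, re_ofNat, mul_re, im_ofNat, zero_mul, sub_zero]
  ring

lemma re_expec_Wabcd_sub_tensorVec_star (a b c d : ℝ) {x : Fin 4 → ℂ} (hx : ∀ k, ‖x k‖ = 1) :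
    (expec (Wabcd a b c d - (2 : ℂ) • Pmat) (tensorVec x (star x))).re =
      4 * (a + b + c + d) - 12 := by
  have hnormSq (k : Fin 4) : normSq (x k) = 1 := by rw [normSq_eq_norm_sq, hx, one_pow]
  have hentry (p : Fin 4 × Fin 4) : normSq (tensorVec x (star x) p) = 1 := by
    simp [tensorVec, hnormSq]
  have hdiag (k : Fin 4) : tensorVec x (star x) (k, k) = 1 := by
    simp [tensorVec, mul_conj, hnormSq]
  have hweights : ∑ p : Fin 4 × Fin 4, ![a + 1, b, c, d] (p.2 - p.1) =
      4 * (a + 1 + b + c + d) := by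
    simp only [Fintype.sum_prod_type, ← Equiv.subRight_apply, Equiv.sum_comp]
    simp [Fin.sum_univ_four, mul_add]
  have halternating : ∑ k : Fin 4, (-1 : ℂ) ^ (k : ℕ) = 0 := by simp [Fin.sum_univ_four, pow_succ]
  rw [re_expec_Wabcd_sub]
  simp only [hentry, hdiag, mul_one, hweights, halternating, Finset.sum_const, Finset.card_univ,
    Fintype.card_fin, nsmul_eq_mul, map_zero]
  norm_num
  ring

lemma re_expec_Wabcd_sub_pairVec_add_one (a b c d : ℝ) (k : Fin 4) {r : ℝ} (hr : r ≠ 0) :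
    (expec (Wabcd a b c d - (2 : ℂ) • Pmat)
      (tensorVec (pairVec k (k + 1) r) (pairVec k (k + 1) (r : ℂ)⁻¹))).re =
      b * r⁻¹ ^ 2 + d * r ^ 2 - 2 * (1 - a) := by
  rw [re_expec_Wabcd_sub]
  fin_cases k <;>
    simp [tensorVec, pairVec, Pi.single_apply, Fintype.sum_prod_type, Fin.sum_univ_four, hr,
      pow_succ, one_add_one_eq_two] <;>
    field_simp <;> ring

lemma re_expec_Wabcd_sub_pairVec_add_two (a b c d : ℝ) (k : Fin 4) :
    (expec (Wabcd a b c d - (2 : ℂ) • Pmat)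
      (tensorVec (pairVec k (k + 2) 1) (pairVec k (k + 2) 1⁻¹))).re = 2 * (a + c) - 4 := by
  rw [re_expec_Wabcd_sub]
  fin_cases k <;>
    simp [tensorVec, pairVec, Pi.single_apply, Fintype.sum_prod_type, Fin.sum_univ_four,
      pow_succ] <;>
    norm_num <;> ring

end Witness

section Optimality

variable {a b : ℝ} {D : Matrix (Fin 4 × Fin 4) (Fin 4 × Fin 4) ℂ} {ε : ℝ}

lemma mulVec_single_eq_zero_of_ne {c d : ℝ} (habcd : a + b + c + d = 3) (hD : D.PosSemidef)
    (hε : 0 < ε) (hW : IsBlockPositive (Wabcd a b c d - (2 : ℂ) • Pmat - (ε : ℂ) • D))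
    {k l : Fin 4} (hkl : k ≠ l) : D *ᵥ Pi.single (k, l) 1 = 0 := by
  suffices hspan : Submodule.span ℂ {v | ∃ x : Fin 4 → ℂ, (∀ m, ‖x m‖ = 1) ∧
      tensorVec x (star x) = v} ≤ LinearMap.ker D.mulVecLin from
    hspan (single_mem_span_tensorVec_star hkl)
  rw [Submodule.span_le]
  rintro _ ⟨x, hx, rfl⟩
  refine mulVec_tensorVec_eq_zero hD hε hW ?_
  rw [re_expec_Wabcd_sub_tensorVec_star a b c d hx, habcd]
  norm_num

lemma mulVec_tensorVec_pairVec {k l : Fin 4} (hkl : D *ᵥ Pi.single (k, l) 1 = 0)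
    (hlk : D *ᵥ Pi.single (l, k) 1 = 0) {r : ℂ} (hr : r ≠ 0) :
    D *ᵥ tensorVec (pairVec k l r) (pairVec k l r⁻¹) =
      D *ᵥ (Pi.single (k, k) 1 + Pi.single (l, l) 1) := by
  rw [tensorVec_pairVec hr, mulVec_add, mulVec_add _ (r⁻¹ • _), mulVec_smul, mulVec_smul,
    hkl, hlk, smul_zero, smul_zero, add_zero, add_zero]

lemma isOptimalWitness_Wabcd_sub (ha : a ≤ 1) (hab : b * (1 - b) = (1 - a) ^ 2) :
    IsOptimalWitness (Wabcd a b (2 - a) (1 - b) - (2 : ℂ) • Pmat) := by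
  intro D hD hD0 ε hε hW
  have hb : 0 ≤ b := by nlinarith
  have hb' : 0 ≤ 1 - b := by nlinarith
  have hsqrt : √(b * (1 - b)) = 1 - a := by rw [hab, sqrt_sq (sub_nonneg.2 ha)]
  have hoff (k l : Fin 4) (hkl : k ≠ l) : D *ᵥ Pi.single (k, l) 1 = 0 :=
    mulVec_single_eq_zero_of_ne (by ring) hD hε hW hkl
  have hnext (k : Fin 4) : D *ᵥ Pi.single (k, k) 1 + D *ᵥ Pi.single (k + 1, k + 1) 1 = 0 := by
    rw [← mulVec_add]
    refine mulVec_eq_zero_of_forall_exists_expec_le hD hε hW fun η hη => ?_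
    obtain ⟨r, hr, hrη⟩ := exists_pos_mul_inv_sq_add_mul_sq_le hb hb' hη
    refine ⟨pairVec k (k + 1) r, pairVec k (k + 1) (r : ℂ)⁻¹,
      mulVec_tensorVec_pairVec (hoff _ _ (by simp)) (hoff _ _ (by simp))
        (ofReal_ne_zero.2 hr.ne'), ?_⟩
    rw [re_expec_Wabcd_sub_pairVec_add_one _ _ _ _ k hr.ne']
    linarith
  have hopposite (k : Fin 4) : D *ᵥ Pi.single (k, k) 1 + D *ᵥ Pi.single (k + 2, k + 2) 1 = 0 := by
    rw [← mulVec_add, ← mulVec_tensorVec_pairVec (hoff _ _ (by simp)) (hoff _ _ (by simp))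
      one_ne_zero]
    refine mulVec_tensorVec_eq_zero hD hε hW ?_
    rw [re_expec_Wabcd_sub_pairVec_add_two]
    ring
  have hdiag (k : Fin 4) : D *ᵥ Pi.single (k, k) 1 = 0 := by
    have hnext' := hnext (k + 1)
    rw [show k + 1 + 1 = k + 2 from add_assoc k 1 1] at hnext'
    linear_combination (norm := module) (1 / 2 : ℂ) • (hnext k + hopposite k - hnext')
  refine hD0 (ext_of_mulVec_single fun ⟨k, l⟩ => ?_)
  rw [zero_mulVec]
  rcases eq_or_ne k l with rfl | hkl
  exacts [hdiag k, hoff k l hkl]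

end Optimality

theorem WI_optimized_is_optimal (θ : ℝ) (hθ : θ ∈ Set.Icc 0 π)
    (D : Matrix (Fin 4 × Fin 4) (Fin 4 × Fin 4) ℂ) (hD : D.PosSemidef) (hD0 : D ≠ 0)
    (ε : ℝ) (hε : 0 < ε) :
    ∃ x y : Fin 4 → ℂ,
      (expec (WI θ - (2 : ℂ) • Pmat - (ε : ℂ) • D) (tensorVec x y)).re < 0 := by
  obtain ⟨hθ0, hθπ⟩ := hθ
  have hopt : IsOptimalWitness (WI θ - (2 : ℂ) • Pmat) := by
    refine isOptimalWitness_Wabcd_sub ?_ ?_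
    · linarith [sin_nonneg_of_nonneg_of_le_pi hθ0 hθπ]
    · linear_combination (-1 / 4) * Real.sin_sq_add_cos_sq θ
  have hneg := hopt D hD hD0 ε hε
  simpa only [IsBlockPositive, not_forall, not_le] using hneg
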